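/- With Ω, Δ, d, r, n as above, the integral ∫_Ω |K_λ(x)|² Δ(x)^μ dx converges if and only if μ > −1 and μ − 2Re λ > −3 − (r−1)d. -/

import Mathlib

open MeasureTheory Real
open scoped RealInnerProductSpace

/-- The complex Gindikin Gamma function
`Γ_Ω(z) = (2π)^{r(r−1)d/4} ∏_{i=0}^{r-1} Γ(z − i·d/2)` of a symmetric cone of rank `r`
and multiplicity `d`. -/
noncomputable def gindikinGamma (r : ℕ) (d : ℝ) (z : ℂ) : ℂ :=
  (((2 * Real.pi) ^ ((r : ℝ) * ((r : ℝ) - 1) * d / 4) : ℝ) : ℂ) *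
    ∏ i ∈ Finset.range r, Complex.Gamma (z - (i : ℝ) * d / 2)

/-- The K-Bessel function `𝒦_λ(x) = ∫_Ω e^{−tr(v)−(x|v⁻¹)} Δ(v)^{−λ} dv` of a
symmetric cone `Ω` with determinant `Δ`, trace `tr` and inversion `jinv`. -/
noncomputable def coneKBessel {E : Type*} [NormedAddCommGroup E] [InnerProductSpace ℝ E]
    [MeasurableSpace E] (μ : Measure E) (Ω : Set E) (Δ tr : E → ℝ) (jinv : E → E)
    (lam : ℂ) (x : E) : ℂ :=
  ∫ v in Ω, Complex.exp (((-(tr v) - ⟪x, jinv v⟫ : ℝ) : ℂ)) * ((Δ v : ℂ) ^ (-lam)) ∂μ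

/-!
Write `w(u) = e^{-tr u} Δ(u)^{-λ}` and `N = n / r`, so that `𝒦_λ(x) = ∫ e^{-(x|u⁻¹)} w(u) du`.
Expanding the square, `∫ |𝒦_λ|² Δ^m` depends on the kernel `e^{-(x|u⁻¹)}` only through its Gram
kernel `∫ e^{-(x|u⁻¹ + v⁻¹)} Δ(x)^m dx = Γ_Ω(m + N) Δ(u⁻¹ + v⁻¹)^{-(m + N)}`. As
`Δ(u⁻¹ + v⁻¹) = Δ(u + v) Δ(u)⁻¹ Δ(v)⁻¹`, the kernel `e^{-(x|u)} Δ(u)^{m + N}` has the same Gram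
kernel, and against `w` it integrates to the explicit Laplace transform
`Γ_Ω(m - λ + 2N) Δ(x + e)^{-(m - λ + 2N)}`. What remains is a beta integral: with
`b = m + 2N - 2 Re λ`,
`∫ |𝒦_λ|² Δ^m = |Γ_Ω(m - λ + 2N)|² Γ_Ω(m + N) Γ_Ω(b + N) / Γ_Ω(m + b + 2N)`,
finite when `m > -1` and `b > -1`.

If the integral converged for some exponent `m` violating this, let `m₀ ≥ m` be the threshold. From
`Δ^t ≤ Δ^m + Δ^{m₀ + 1}` the integral would stay bounded as `t ↓ m₀`, whereas one of the two Gamma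
factors above has a pole there.

The inversion is only known through `Δ(u⁻¹ + v⁻¹)`, but that determines it: Gindikin's formula makes
`Δ` continuous and the functions `v ↦ Δ(z + v)` distinct for distinct `z`, whence the inversion is
Borel measurable. That the cone of squares is closed under addition follows from its being dual to
itself: a `y` with `(y|w²) ≥ 0` for all `w` acts positively on the associative algebra `ℝ[y]`, and
so has a square root there.
-/

open scoped Pointwise

/-! ### Jordan algebras -/

/-- A bilinear product with unit `one` is a unital Jordan product: it is commutative and satisfies
the Jordan identity `x²(xy) = x(x²y)`. The product is a bilinear map rather than a `Mul` instance,
so that it can live on an inner product space without a second additive structure. -/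
structure IsUnitalJordanProduct {R M : Type*} [CommRing R] [AddCommGroup M] [Module R M]
    (mul : M →ₗ[R] M →ₗ[R] M) (one : M) : Prop where
  comm : ∀ x y, mul x y = mul y x
  jordan : ∀ x y, mul (mul x x) (mul x y) = mul x (mul (mul x x) y)
  one_mul : ∀ x, mul one x = x

namespace IsUnitalJordanProduct

section Algebra

variable {R M : Type*} [CommRing R] [AddCommGroup M] [Module R M]
  {mul : M →ₗ[R] M →ₗ[R] M} {one : M}

/-- Evaluation `p ↦ p(x)` of polynomials in a unital Jordan algebra, with powers
`xᵏ = L(x)ᵏ 1`. -/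
noncomputable def polyEval (mul : M →ₗ[R] M →ₗ[R] M) (one x : M) : Polynomial R →ₗ[R] M :=
  (LinearMap.applyₗ one : Module.End R M →ₗ[R] M) ∘ₗ (Polynomial.aeval (mul x)).toLinearMap

theorem polyEval_apply (x : M) (p : Polynomial R) :
    polyEval mul one x p = (Polynomial.aeval (mul x : Module.End R M) p) one := rfl

@[simp]
theorem polyEval_one (x : M) : polyEval mul one x 1 = one := by
  simp [polyEval_apply]

theorem polyEval_X_mul (x : M) (p : Polynomial R) :
    polyEval mul one x (Polynomial.X * p) = mul x (polyEval mul one x p) := by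
  simp [polyEval_apply]

theorem linearized_jordan [Invertible (2 : R)] (h : IsUnitalJordanProduct mul one)
    (a b c y : M) :
    mul (mul a b) (mul c y) + mul (mul b c) (mul a y) + mul (mul c a) (mul b y)
      = mul c (mul (mul a b) y) + mul a (mul (mul b c) y) + mul b (mul (mul c a) y) := by
  have habc := h.jordan (a + b + c) y
  have hab := h.jordan (a + b) y
  have hbc := h.jordan (b + c) y
  have hca := h.jordan (c + a) y
  simp only [map_add, LinearMap.add_apply, h.comm b a, h.comm c b, h.comm a c]
    at habc hab hbc hca
  refine (isUnit_of_invertible (2 : R)).smul_left_cancel.1 ?_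
  linear_combination (norm := module) habc - hab - hbc - hca + h.jordan a y + h.jordan b y
    + h.jordan c y

theorem mul_mul_mul_apply [Invertible (2 : R)] (h : IsUnitalJordanProduct mul one)
    (a b c y : M) :
    mul (mul (mul a b) c) y
      = mul c (mul (mul a b) y) + mul a (mul (mul b c) y) + mul b (mul (mul c a) y)
        - mul a (mul c (mul b y)) - mul b (mul c (mul a y)) := by
  have hy := h.linearized_jordan a b c y
  have hc := h.linearized_jordan a b y c
  rw [h.comm y (mul (mul a b) c), h.comm y c, h.comm (mul b y) (mul a c),
    h.comm (mul y a) (mul b c), h.comm (mul b y) c, h.comm (mul y a) c, h.comm y a,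
    h.comm a c] at hc
  linear_combination (norm := module) hy - hc

theorem commute_mul_mul_self_mul [Invertible (2 : R)] (h : IsUnitalJordanProduct mul one)
    {a x : M} (ha : Commute (mul a : Module.End R M) (mul x))
    (hxa : Commute (mul (mul x a) : Module.End R M) (mul x)) :
    Commute (mul (mul x (mul x a)) : Module.End R M) (mul x) := by
  have hx : Commute (mul x : Module.End R M) (mul x) := Commute.refl _
  have hxx : Commute (mul (mul x x) : Module.End R M) (mul x) := LinearMap.ext (h.jordan x)
  have hL : (mul (mul x (mul x a)) : Module.End R M)
      = mul x * mul (mul x a) + mul x * mul (mul x a) + mul a * mul (mul x x)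
        - mul x * (mul x * mul a) - mul a * (mul x * mul x) := by
    ext v
    have hv := h.mul_mul_mul_apply x a x v
    rw [h.comm a x, h.comm _ x] at hv
    exact hv
  rw [hL]
  exact ((((hx.mul_left hxa).add_left (hx.mul_left hxa)).add_left (ha.mul_left hxx)).sub_left
    (hx.mul_left (hx.mul_left ha))).sub_left (ha.mul_left (hx.mul_left hx))

theorem commute_mul_polyEval [Invertible (2 : R)] (h : IsUnitalJordanProduct mul one) (x : M)
    (p : Polynomial R) :
    Commute (mul (polyEval mul one x p) : Module.End R M) (mul x) := by
  have hpow (k : ℕ) : Commute (mul (polyEval mul one x (.X ^ k)) : Module.End R M) (mul x) ∧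
      Commute (mul (polyEval mul one x (.X ^ (k + 1))) : Module.End R M) (mul x) := by
    induction k with
    | zero =>
      have hmulone : (mul one : Module.End R M) = 1 := LinearMap.ext h.one_mul
      rw [pow_one, pow_zero, ← mul_one Polynomial.X, polyEval_X_mul, polyEval_one, h.comm x,
        h.one_mul, hmulone]
      exact ⟨Commute.one_left _, Commute.refl _⟩
    | succ k ih =>
      refine ⟨ih.2, ?_⟩
      rw [pow_succ', polyEval_X_mul] at ih
      rw [pow_succ', pow_succ', polyEval_X_mul, polyEval_X_mul]
      exact h.commute_mul_mul_self_mul ih.1 ih.2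
  induction p using Polynomial.induction_on' with
  | add p q hp hq => simpa only [map_add] using hp.add_left hq
  | monomial n c =>
    rw [← Polynomial.C_mul_X_pow_eq_monomial, ← Polynomial.smul_eq_C_mul, map_smul, map_smul]
    exact (hpow n).1.smul_left c

theorem mul_polyEval_polyEval [Invertible (2 : R)] (h : IsUnitalJordanProduct mul one) (x : M)
    (p q : Polynomial R) :
    mul (polyEval mul one x p) (polyEval mul one x q) = polyEval mul one x (p * q) := by
  have hcomm : Commute (mul (polyEval mul one x p) : Module.End R M)
      (Polynomial.aeval (mul x : Module.End R M) q) :=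
    Algebra.commute_of_mem_adjoin_singleton_of_commute
      (Polynomial.aeval_mem_adjoin_singleton R _) (h.commute_mul_polyEval x p)
  calc mul (polyEval mul one x p) (polyEval mul one x q)
      = Polynomial.aeval (mul x : Module.End R M) q (mul (polyEval mul one x p) one) :=
        LinearMap.congr_fun hcomm.eq one
    _ = polyEval mul one x (p * q) := by
        rw [h.comm _ one, h.one_mul, mul_comm p, polyEval_apply, polyEval_apply, map_mul]; rfl

end Algebra

end IsUnitalJordanProduct

/-! ### The cone of squares -/

theorem aeval_restrict_apply {R M : Type*} [CommRing R] [AddCommGroup M] [Module R M]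
    {f : Module.End R M} {A : Submodule R M} (hf : ∀ x ∈ A, f x ∈ A) (p : Polynomial R) (x : A) :
    (Polynomial.aeval (f.restrict hf) p x : M) = Polynomial.aeval f p x := by
  induction p using Polynomial.induction_on generalizing x with
  | C a => simp [Module.algebraMap_end_apply]
  | add p q hp hq => simp [hp, hq]
  | monomial n a ih =>
    rw [pow_succ, ← mul_assoc, map_mul, map_mul]
    simpa [pow_succ] using ih (f.restrict hf x)

theorem exists_aeval_sq_eq_of_isPositive {F : Type*} [NormedAddCommGroup F]
    [InnerProductSpace ℝ F] [FiniteDimensional ℝ F] {T : F →ₗ[ℝ] F} (hT : T.IsPositive) :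
    ∃ q : Polynomial ℝ, Polynomial.aeval T (q * q) = T := by
  classical
  let ev := hT.isSymmetric.eigenvalues rfl
  let S := Finset.univ.image ev
  let q := Lagrange.interpolate S id Real.sqrt
  have hq (i) : (q * q).eval (ev i) = ev i := by
    have hi : q.eval (ev i) = √(ev i) := Lagrange.eval_interpolate_at_node (v := id) _
      Function.injective_id.injOn (Finset.mem_image_of_mem _ (Finset.mem_univ i))
    rw [Polynomial.eval_mul, hi, Real.mul_self_sqrt (hT.nonneg_eigenvalues rfl i)]
  refine ⟨q, (hT.isSymmetric.eigenvectorBasis rfl).toBasis.ext fun i => ?_⟩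
  have hTi := hT.isSymmetric.apply_eigenvectorBasis rfl i
  rw [OrthonormalBasis.coe_toBasis, Module.End.aeval_apply_of_mem_apply_eq_smul hTi, hTi]
  exact congrArg (· • _) (hq i)

theorem eventually_cofinite_surjective_add_smul_one {K V : Type*} [Field K] [AddCommGroup V]
    [Module K V] [FiniteDimensional K V] (T : Module.End K V) :
    ∀ᶠ t : K in Filter.cofinite, Function.Surjective (T + t • (1 : Module.End K V)) := by
  have hfin : {t : K | T.HasEigenvalue (-t)}.Finite :=
    T.finite_hasEigenvalue.preimage neg_injective.injOn
  filter_upwards [hfin.compl_mem_cofinite] with t ht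
  refine LinearMap.injective_iff_surjective.1
    ((injective_iff_map_eq_zero _).2 fun v hv => by_contra fun hv0 => ht ?_)
  refine Module.End.hasEigenvalue_of_hasEigenvector
    ⟨Module.End.mem_eigenspace_iff.2 ?_, hv0⟩
  simpa [add_eq_zero_iff_eq_neg] using hv

/-- The set of squares of a product. -/
def squares {R M : Type*} [CommRing R] [AddCommGroup M] [Module R M]
    (mul : M →ₗ[R] M →ₗ[R] M) : Set M :=
  {x | ∃ y, x = mul y y}

theorem mul_self_mem_squares {R M : Type*} [CommRing R] [AddCommGroup M] [Module R M]
    (mul : M →ₗ[R] M →ₗ[R] M) (x : M) : mul x x ∈ squares mul :=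
  ⟨x, rfl⟩

theorem smul_mem_interior_squares {M : Type*} [AddCommGroup M] [Module ℝ M] [TopologicalSpace M]
    [ContinuousConstSMul ℝ M] {mul : M →ₗ[ℝ] M →ₗ[ℝ] M} {c : ℝ} (hc : 0 < c) {x : M}
    (hx : x ∈ interior (squares mul)) :
    c • x ∈ interior (squares mul) := by
  have hsub : c • interior (squares mul) ⊆ squares mul := by
    rintro _ ⟨_, hz, rfl⟩
    obtain ⟨y, rfl⟩ := interior_subset hz
    exact ⟨√c • y, by simp [smul_smul, Real.mul_self_sqrt hc.le]⟩
  exact interior_maximal hsub (isOpen_interior.smul₀ hc.ne') (Set.smul_mem_smul_set hx)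

namespace IsUnitalJordanProduct

variable {E : Type*} [NormedAddCommGroup E] [InnerProductSpace ℝ E] [FiniteDimensional ℝ E]
  {mul : E →ₗ[ℝ] E →ₗ[ℝ] E} {one : E}

theorem mem_squares_of_inner_sq_nonneg (h : IsUnitalJordanProduct mul one) {tr : E → ℝ}
    (hinner : ∀ x y : E, ⟪x, y⟫ = tr (mul x y)) {y : E} (hy : ∀ w, 0 ≤ ⟪y, mul w w⟫) :
    y ∈ squares mul := by
  set φ := polyEval mul one y
  have hmem : ∀ v ∈ φ.range, mul y v ∈ φ.range := by
    rintro _ ⟨p, rfl⟩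
    exact ⟨Polynomial.X * p, polyEval_X_mul y p⟩
  let one' : φ.range := ⟨one, 1, polyEval_one y⟩
  have hassoc (p q) : mul (mul y (φ p)) (φ q) = mul y (mul (φ p) (φ q)) := by
    simp only [φ, ← polyEval_X_mul, h.mul_polyEval_polyEval, mul_assoc]
  have hT : ((mul y).restrict hmem).IsPositive := by
    constructor
    · rintro ⟨_, p, rfl⟩ ⟨_, q, rfl⟩
      change ⟪mul y (φ p), φ q⟫ = ⟪φ p, mul y (φ q)⟫
      rw [real_inner_comm, hinner, hinner, h.comm, hassoc, h.comm (φ p) (mul y _), hassoc,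
        h.comm (φ p)]
    · rintro ⟨_, p, rfl⟩
      change 0 ≤ ⟪mul y (φ p), φ p⟫
      rw [hinner, hassoc, ← hinner]; exact hy _
  obtain ⟨q, hq⟩ := exists_aeval_sq_eq_of_isPositive hT
  refine ⟨φ q, ?_⟩
  calc y = ((mul y).restrict hmem one' : E) := by
        rw [LinearMap.coe_restrict_apply, h.comm, h.one_mul]
    _ = φ (q * q) := by rw [← hq, aeval_restrict_apply]; rfl
    _ = mul (φ q) (φ q) := (h.mul_polyEval_polyEval y q q).symm

theorem hasStrictFDerivAt_mul_self (h : IsUnitalJordanProduct mul one) (w : E) :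
    HasStrictFDerivAt (fun x => mul x x) ((2 : ℝ) • (mul w).toContinuousLinearMap) w := by
  let B : E →L[ℝ] E →L[ℝ] E :=
    LinearMap.toContinuousLinearMap (LinearMap.toContinuousLinearMap.toLinearMap ∘ₗ mul)
  refine (HasStrictFDerivAt.comp (f := fun x : E => (x, x)) w
    (B.isBoundedBilinearMap.hasStrictFDerivAt (w, w))
    ((hasStrictFDerivAt_id w).prodMk (hasStrictFDerivAt_id w))).congr_fderiv ?_
  ext v
  change mul w v + mul v w = (2 : ℝ) • mul w v
  rw [h.comm v w, two_smul]

theorem mul_self_mem_interior_squares (h : IsUnitalJordanProduct mul one) {w : E}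
    (hw : Function.Surjective (mul w)) : mul w w ∈ interior (squares mul) := by
  have hsurj : ((2 : ℝ) • (mul w).toContinuousLinearMap).range = ⊤ := by
    refine LinearMap.range_eq_top.2 fun v => ?_
    obtain ⟨u, hu⟩ := hw v
    exact ⟨(1 / 2 : ℝ) • u, by simp [hu, smul_smul]⟩
  rw [mem_interior_iff_mem_nhds, ← (h.hasStrictFDerivAt_mul_self w).map_nhds_eq_of_surj hsurj]
  exact Filter.eventually_map.2 (.of_forall fun x => mul_self_mem_squares mul x)

theorem one_mem_interior_squares (h : IsUnitalJordanProduct mul one) :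
    one ∈ interior (squares mul) := by
  simpa only [h.one_mul] using
    h.mul_self_mem_interior_squares (w := one) fun v => ⟨v, h.one_mul v⟩

theorem mul_self_mem_closure_interior_squares (h : IsUnitalJordanProduct mul one) (y : E) :
    mul y y ∈ closure (interior (squares mul)) := by
  have hlim : Filter.Tendsto (fun t : ℝ => mul (y + t • one) (y + t • one)) (nhdsWithin 0 {0}ᶜ)
      (nhds (mul y y)) := by
    have hcont : Continuous fun t : ℝ => mul (y + t • one) (y + t • one) := by
      simp only [map_add, map_smul, LinearMap.add_apply, LinearMap.smul_apply]
      fun_prop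
    simpa using (hcont.tendsto 0).mono_left nhdsWithin_le_nhds
  have hsurj : ∀ᶠ t : ℝ in nhdsWithin 0 {0}ᶜ, Function.Surjective (mul (y + t • one)) := by
    filter_upwards [nhdsNE_le_cofinite 0
      (eventually_cofinite_surjective_add_smul_one (mul y : Module.End ℝ E))] with t ht
    convert! ht using 2
    ext v
    simp [h.one_mul]
  exact mem_closure_of_tendsto hlim (hsurj.mono fun t ht => h.mul_self_mem_interior_squares ht)

theorem add_mem_interior_squares (h : IsUnitalJordanProduct mul one) {tr : E → ℝ}
    (hinner : ∀ x y : E, ⟪x, y⟫ = tr (mul x y))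
    (hdual : ∀ x ∈ interior (squares mul), ∀ y ∈ interior (squares mul), 0 ≤ ⟪x, y⟫) {x y : E}
    (hx : x ∈ interior (squares mul)) (hy : y ∈ interior (squares mul)) :
    x + y ∈ interior (squares mul) := by
  have hsq (w) {z : E} (hz : z ∈ interior (squares mul)) : 0 ≤ ⟪z, mul w w⟫ := by
    have hclosed : IsClosed {u : E | 0 ≤ ⟪z, u⟫} := isClosed_le continuous_const (by fun_prop)
    exact closure_minimal (hdual z hz) hclosed (h.mul_self_mem_closure_interior_squares w)
  refine interior_maximal ?_ isOpen_interior.add_right (Set.add_mem_add hx hy)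
  rintro _ ⟨x, hx, y, hy, rfl⟩
  refine h.mem_squares_of_inner_sq_nonneg hinner fun w => ?_
  rw [inner_add_left]
  exact add_nonneg (hsq w hx) (hsq w hy)

/-- The interior of the set of squares, a convex cone as soon as it is contained in its dual. -/
def squaresCone (h : IsUnitalJordanProduct mul one) {tr : E → ℝ}
    (hinner : ∀ x y : E, ⟪x, y⟫ = tr (mul x y))
    (hdual : ∀ x ∈ interior (squares mul), ∀ y ∈ interior (squares mul), 0 ≤ ⟪x, y⟫) :
    ConvexCone ℝ E where
  carrier := interior (squares mul)
  smul_mem' _ hc _ hx := smul_mem_interior_squares hc hx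
  add_mem' _ hx _ hy := h.add_mem_interior_squares hinner hdual hx hy

end IsUnitalJordanProduct

/-! ### Laplace transforms on cones -/

theorem inner_nonneg_of_integrableOn_exp_neg_inner {E : Type*} [NormedAddCommGroup E]
    [InnerProductSpace ℝ E] [FiniteDimensional ℝ E] [MeasurableSpace E] [BorelSpace E]
    {μ : Measure E} [μ.IsAddHaarMeasure] {Ω : Set E} (hopen : IsOpen Ω)
    (hsmul : ∀ c : ℝ, 0 < c → ∀ x ∈ Ω, c • x ∈ Ω) {y : E}
    (hint : IntegrableOn (fun x => Real.exp (-⟪x, y⟫)) Ω μ) {x : E} (hx : x ∈ Ω) :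
    0 ≤ ⟪x, y⟫ := by
  by_contra! hxy
  set U := {z | ⟪z, y⟫ < 0} ∩ Ω
  have hUpos : 0 < μ U :=
    ((isOpen_lt (by fun_prop) continuous_const).inter hopen).measure_pos μ ⟨x, hxy, hx⟩
  have hUfin : μ U < ⊤ := by
    refine lt_of_le_of_lt ((Measure.le_restrict_apply _ _).trans (measure_mono fun z hz => ?_))
      (hint.measure_ge_lt_top one_pos)
    exact Real.one_le_exp (neg_nonneg.2 (le_of_lt hz))
  have hUsmul : (2 : ℝ) • U ⊆ U := by
    rintro _ ⟨z, ⟨hzy, hz⟩, rfl⟩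
    refine ⟨?_, hsmul 2 two_pos z hz⟩
    change ⟪(2 : ℝ) • z, y⟫ < 0
    rw [real_inner_smul_left]
    exact mul_neg_of_pos_of_neg two_pos hzy
  have : Nontrivial E := ⟨x, 0, by rintro rfl; simp at hxy⟩
  have hexpand : (1 : ENNReal) < ENNReal.ofReal |2 ^ Module.finrank ℝ E| := by
    rw [abs_of_pos (by positivity), ENNReal.one_lt_ofReal]
    exact one_lt_pow₀ one_lt_two Module.finrank_pos.ne'
  refine (measure_mono (μ := μ) hUsmul).not_gt ?_
  rw [Measure.addHaar_smul]
  simpa using ENNReal.mul_lt_mul_left hUpos.ne' hUfin.ne hexpand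

theorem eq_of_forall_mem_inner_eq {E : Type*} [NormedAddCommGroup E] [InnerProductSpace ℝ E]
    {s : Set E} (hopen : IsOpen s) (hne : s.Nonempty) {z z' : E}
    (h : ∀ x ∈ s, ⟪x, z⟫ = ⟪x, z'⟫) : z = z' := by
  have htop : (ℝ ∙ (z - z'))ᗮ = ⊤ := by
    refine Submodule.eq_top_of_nonempty_interior' _ (hne.mono ?_)
    refine interior_maximal (fun x hx => ?_) hopen
    rw [SetLike.mem_coe, Submodule.mem_orthogonal_singleton_iff_inner_left, inner_sub_right, h x hx,
      sub_self]
  rw [Submodule.orthogonal_eq_top_iff, Submodule.span_singleton_eq_bot] at htop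
  exact sub_eq_zero.1 htop

section LaplaceTransform

variable {E : Type*} [NormedAddCommGroup E] [InnerProductSpace ℝ E] [MeasurableSpace E]

theorem convexOn_integral_exp_neg_inner {μ : Measure E} {s : Set E} (hs : Convex ℝ s)
    (hint : ∀ y ∈ s, Integrable (fun x => Real.exp (-⟪x, y⟫)) μ) :
    ConvexOn ℝ s fun y => ∫ x, Real.exp (-⟪x, y⟫) ∂μ := by
  refine ⟨hs, fun x hx y hy a b ha hb hab => ?_⟩
  have hax := (hint x hx).const_mul a
  have hby := (hint y hy).const_mul b
  simp only [smul_eq_mul]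
  rw [← integral_const_mul, ← integral_const_mul, ← integral_add hax hby]
  refine integral_mono (hint _ (hs hx hy ha hb hab)) (hax.add hby) fun t => ?_
  have hexp := convexOn_exp.2 (Set.mem_univ (-⟪t, x⟫)) (Set.mem_univ (-⟪t, y⟫)) ha hb hab
  simp only [smul_eq_mul] at hexp
  refine le_of_eq_of_le (congrArg Real.exp ?_) hexp
  rw [inner_add_right, real_inner_smul_right, real_inner_smul_right]
  ring

theorem inner_ae_eq_of_integral_exp_neg_inner_eq {μ : Measure E} {s : Set E}
    (hadd : ∀ x ∈ s, ∀ y ∈ s, x + y ∈ s)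
    (hint : ∀ y ∈ s, Integrable (fun x => Real.exp (-⟪x, y⟫)) μ) {z z' : E} (hz : z ∈ s)
    (hz' : z' ∈ s)
    (heq : ∀ v ∈ s, ∫ x, Real.exp (-⟪x, z + v⟫) ∂μ = ∫ x, Real.exp (-⟪x, z' + v⟫) ∂μ) :
    ∀ᵐ x ∂μ, ⟪x, z⟫ = ⟪x, z'⟫ := by
  let D (v x : E) : ℝ := Real.exp (-⟪x, z + v⟫) - Real.exp (-⟪x, z' + v⟫)
  have hDint {v} (hv : v ∈ s) : Integrable (D v) μ :=
    (hint _ (hadd _ hz _ hv)).sub (hint _ (hadd _ hz' _ hv))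
  have hDzero {v} (hv : v ∈ s) : ∫ x, D v x ∂μ = 0 := by
    rw [integral_sub (hint _ (hadd _ hz _ hv)) (hint _ (hadd _ hz' _ hv)), heq v hv, sub_self]
  have hzz := hadd _ hz _ hz
  have hz'z := hadd _ hz' _ hz
  have hsq : (fun x => D (z + z) x - D (z' + z) x)
      = fun x => (Real.exp (-⟪x, z⟫) - Real.exp (-⟪x, z'⟫)) ^ 2 * Real.exp (-⟪x, z⟫) := by
    ext x
    simp only [D, inner_add_right, neg_add, Real.exp_add]
    ring
  have hzero := integral_sub (hDint hzz) (hDint hz'z)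
  have hsqint := (hDint hzz).sub' (hDint hz'z)
  rw [hDzero hzz, hDzero hz'z, sub_self, hsq] at hzero
  rw [hsq] at hsqint
  rw [integral_eq_zero_iff_of_nonneg (fun x => by positivity) hsqint] at hzero
  filter_upwards [hzero] with x hx
  simpa [sub_eq_zero, Real.exp_ne_zero] using hx

end LaplaceTransform

theorem measurable_of_involutive_of_apply_add {X : Type*} [TopologicalSpace X]
    [PolishSpace X] [MeasurableSpace X] [BorelSpace X] [Add X] [ContinuousAdd X] {Δ : X → ℝ}
    (hΔ : Continuous Δ) (hne : ∀ x, Δ x ≠ 0)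
    (hsep : ∀ z z', (∀ v, Δ (z + v) = Δ (z' + v)) → z = z') {J : X → X}
    (hJ : Function.Involutive J)
    (hadd : ∀ u v, Δ (J u + J v) = Δ (u + v) * (Δ u)⁻¹ * (Δ v)⁻¹) : Measurable J := by
  obtain ⟨D, hDc, hD⟩ := TopologicalSpace.exists_countable_dense X
  have : Countable D := hDc
  let F (z : X) (v : D) : ℝ := Δ (z + v)
  have hF : Continuous F := continuous_pi fun v => by fun_prop
  have hFinj : Function.Injective F := fun z z' h => hsep z z' fun v =>
    congrFun (Continuous.ext_on (f := fun v => Δ (z + v)) (g := fun v => Δ (z' + v)) hD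
      (by fun_prop) (by fun_prop) fun v hv => congrFun h ⟨v, hv⟩) v
  rw [← (hF.measurableEmbedding hFinj).measurable_comp_iff]
  refine (continuous_pi fun v => ?_).measurable
  have hv : (fun u => F (J u) v) = fun u => Δ (u + J v) * (Δ u)⁻¹ * (Δ (J v))⁻¹ :=
    funext fun u => by simp only [F, ← hadd, hJ (v : X)]
  exact hv ▸ ((by fun_prop : Continuous fun u => Δ (u + J v)).mul (hΔ.inv₀ hne)).mul_const _

/-! ### Analytic continuation and Gram matrices of integral kernels -/

theorem integral_cpow_eq_of_integral_rpow_eq {X : Type*} [MeasurableSpace X] {ρ : Measure X}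
    {f : X → ℝ} (hpos : ∀ x, 0 < f x) {a : ℝ} {H : ℂ → ℂ}
    (hH : DifferentiableOn ℂ H {z | a < z.re})
    (hint : ∀ s : ℝ, a < s → Integrable (fun x => f x ^ s) ρ)
    (heq : ∀ s : ℝ, a < s → ((∫ x, f x ^ s ∂ρ : ℝ) : ℂ) = H s) {z : ℂ} (hz : a < z.re) :
    ∫ x, (f x : ℂ) ^ z ∂ρ = H z := by
  have hopen : IsOpen {z : ℂ | a < z.re} := isOpen_lt continuous_const Complex.continuous_re
  have hmgf (w : ℂ) : ProbabilityTheory.complexMGF (fun x => Real.log (f x)) ρ w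
      = ∫ x, (f x : ℂ) ^ w ∂ρ := by
    refine integral_congr_ae (.of_forall fun x => ?_)
    change Complex.exp (w * (Real.log (f x) : ℂ)) = (f x : ℂ) ^ w
    rw [Complex.ofReal_log (hpos x).le, mul_comm,
      Complex.cpow_def_of_ne_zero (Complex.ofReal_ne_zero.2 (hpos x).ne')]
  have hsub : Set.Ioi a ⊆ ProbabilityTheory.integrableExpSet (fun x => Real.log (f x)) ρ := by
    intro s hs
    refine (hint s hs).congr (.of_forall fun x => ?_)
    simp only [Real.rpow_def_of_pos (hpos x), mul_comm s]
  have hanalytic : AnalyticOnNhd ℂ (ProbabilityTheory.complexMGF (fun x => Real.log (f x)) ρ)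
      {z | a < z.re} :=
    ProbabilityTheory.analyticOnNhd_complexMGF.mono fun w hw => interior_maximal hsub isOpen_Ioi hw
  have hreal (s : ℝ) (hs : a < s) :
      ProbabilityTheory.complexMGF (fun x => Real.log (f x)) ρ s = H s := by
    rw [hmgf, ← heq s hs, ← integral_complex_ofReal]
    exact integral_congr_ae (.of_forall fun x => (Complex.ofReal_cpow (hpos x).le s).symm)
  have hfreq : ∃ᶠ w in nhdsWithin ((a + 1 : ℝ) : ℂ) {((a + 1 : ℝ) : ℂ)}ᶜ,
      ProbabilityTheory.complexMGF (fun x => Real.log (f x)) ρ w = H w := by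
    have hlim : Filter.Tendsto ((↑) : ℝ → ℂ) (nhdsWithin (a + 1) (Set.Ioi (a + 1)))
        (nhdsWithin ((a + 1 : ℝ) : ℂ) {((a + 1 : ℝ) : ℂ)}ᶜ) :=
      tendsto_nhdsWithin_iff.2 ⟨Complex.continuous_ofReal.continuousWithinAt,
        eventually_mem_nhdsWithin.mono fun s hs =>
          Complex.ofReal_injective.ne (ne_of_gt (Set.mem_Ioi.1 hs))⟩
    refine hlim.frequently (Filter.Eventually.frequently ?_)
    filter_upwards [self_mem_nhdsWithin] with s hs
    exact hreal s (lt_trans (by linarith) hs)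
  rw [← hmgf]
  exact hanalytic.eqOn_of_preconnected_of_frequently_eq (hH.analyticOnNhd hopen)
    (convex_halfSpace_re_gt a).isPreconnected (by simp) hfreq hz

section Gram

variable {X Y : Type*} [MeasurableSpace X] [MeasurableSpace Y] {ρ : Measure X} {ν : Measure Y}
  [SFinite ν] {p : X → Y → ℂ}

theorem integrable_mul_conj_of_lintegral_sq_lt_top (hp : Measurable (Function.uncurry p))
    (hfin : ∫⁻ x, (∫⁻ u, ‖p x u‖ₑ ∂ν) ^ 2 ∂ρ < ⊤) :
    Integrable (fun w : X × Y × Y => p w.1 w.2.1 * starRingEnd ℂ (p w.1 w.2.2))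
      (ρ.prod (ν.prod ν)) := by
  have hmeas : Measurable fun w : X × Y × Y => p w.1 w.2.1 * starRingEnd ℂ (p w.1 w.2.2) := by
    have hconj := Complex.continuous_conj.measurable
    fun_prop
  refine ⟨hmeas.aestronglyMeasurable, lt_of_eq_of_lt ?_ hfin⟩
  rw [lintegral_prod _ hmeas.enorm.aemeasurable]
  refine lintegral_congr fun x => ?_
  simp only [enorm_mul, RCLike.enorm_conj]
  rw [sq, ← lintegral_prod_mul (by fun_prop) (by fun_prop)]

theorem ofReal_norm_integral_sq (f : Y → ℂ) :
    ((‖∫ u, f u ∂ν‖ ^ 2 : ℝ) : ℂ) = ∫ w, f w.1 * starRingEnd ℂ (f w.2) ∂(ν.prod ν) := by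
  rw [integral_prod_mul f fun v => starRingEnd ℂ (f v), integral_conj,
    Complex.mul_conj, Complex.normSq_eq_norm_sq]

theorem integrable_norm_integral_sq (hp : Measurable (Function.uncurry p))
    (hfin : ∫⁻ x, (∫⁻ u, ‖p x u‖ₑ ∂ν) ^ 2 ∂ρ < ⊤) :
    Integrable (fun x => ‖∫ u, p x u ∂ν‖ ^ 2) ρ := by
  have hcomplex := (integrable_mul_conj_of_lintegral_sq_lt_top hp hfin).integral_prod_left
  simp only [← ofReal_norm_integral_sq] at hcomplex
  exact hcomplex.re

theorem lintegral_lintegral_sq [SFinite ρ] {f : X → Y → ENNReal}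
    (hf : Measurable (Function.uncurry f)) :
    ∫⁻ x, (∫⁻ u, f x u ∂ν) ^ 2 ∂ρ = ∫⁻ w, ∫⁻ x, f x w.1 * f x w.2 ∂ρ ∂(ν.prod ν) := by
  rw [← lintegral_lintegral_swap (by fun_prop)]
  refine lintegral_congr fun x => ?_
  rw [sq, lintegral_prod_mul (by fun_prop) (by fun_prop)]

theorem ofReal_integral_norm_integral_sq [SFinite ρ] (hp : Measurable (Function.uncurry p))
    (hfin : ∫⁻ x, (∫⁻ u, ‖p x u‖ₑ ∂ν) ^ 2 ∂ρ < ⊤) :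
    ((∫ x, ‖∫ u, p x u ∂ν‖ ^ 2 ∂ρ : ℝ) : ℂ)
      = ∫ w, ∫ x, p x w.1 * starRingEnd ℂ (p x w.2) ∂ρ ∂(ν.prod ν) := by
  rw [← integral_complex_ofReal]
  simp only [ofReal_norm_integral_sq]
  exact integral_integral_swap (integrable_mul_conj_of_lintegral_sq_lt_top hp hfin)

theorem lintegral_enorm_mul_mul_enorm_mul {k : X → Y → ℝ} (hk : Measurable (Function.uncurry k))
    (hk_nonneg : ∀ x u, 0 ≤ k x u) (c : Y → ℂ) (u v : Y) :
    ∫⁻ x, ‖k x u * c u‖ₑ * ‖k x v * c v‖ₑ ∂ρ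
      = (∫⁻ x, ENNReal.ofReal (k x u * k x v) ∂ρ) * (‖c u‖ₑ * ‖c v‖ₑ) := by
  rw [← lintegral_mul_const _ (by fun_prop)]
  refine lintegral_congr fun x => ?_
  rw [enorm_mul, enorm_mul, ← ofReal_norm (k x u : ℂ), ← ofReal_norm (k x v : ℂ),
    Complex.norm_of_nonneg (hk_nonneg x u), Complex.norm_of_nonneg (hk_nonneg x v),
    ENNReal.ofReal_mul (hk_nonneg x u)]
  ring

theorem integral_mul_mul_conj_mul {k : X → Y → ℝ} (hk : Measurable (Function.uncurry k))
    (hk_nonneg : ∀ x u, 0 ≤ k x u) (c : Y → ℂ) (u v : Y) :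
    ∫ x, k x u * c u * starRingEnd ℂ (k x v * c v) ∂ρ
      = (∫⁻ x, ENNReal.ofReal (k x u * k x v) ∂ρ).toReal * (c u * starRingEnd ℂ (c v)) := by
  rw [← integral_eq_lintegral_of_nonneg_ae
    (.of_forall fun x => mul_nonneg (hk_nonneg x u) (hk_nonneg x v)) (by fun_prop),
    ← integral_complex_ofReal, ← integral_mul_const]
  refine integral_congr_ae (.of_forall fun x => ?_)
  simp only [map_mul, Complex.conj_ofReal, Complex.ofReal_mul]
  ring

theorem integral_norm_integral_sq_eq_of_gram_eq [SFinite ρ] {k l : X → Y → ℝ} {c : Y → ℂ}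
    (hk : Measurable (Function.uncurry k)) (hl : Measurable (Function.uncurry l))
    (hc : Measurable c) (hk_nonneg : ∀ x u, 0 ≤ k x u) (hl_nonneg : ∀ x u, 0 ≤ l x u)
    (hgram : ∀ u v, ∫⁻ x, ENNReal.ofReal (k x u * k x v) ∂ρ
      = ∫⁻ x, ENNReal.ofReal (l x u * l x v) ∂ρ)
    (hfin : ∫⁻ x, (∫⁻ u, ‖l x u * c u‖ₑ ∂ν) ^ 2 ∂ρ < ⊤) :
    Integrable (fun x => ‖∫ u, k x u * c u ∂ν‖ ^ 2) ρ ∧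
      ∫ x, ‖∫ u, k x u * c u ∂ν‖ ^ 2 ∂ρ = ∫ x, ‖∫ u, l x u * c u ∂ν‖ ^ 2 ∂ρ := by
  have hkc : Measurable (Function.uncurry fun x u => k x u * c u) := by fun_prop
  have hlc : Measurable (Function.uncurry fun x u => l x u * c u) := by fun_prop
  have hkfin : ∫⁻ x, (∫⁻ u, ‖k x u * c u‖ₑ ∂ν) ^ 2 ∂ρ < ⊤ := by
    refine lt_of_eq_of_lt ?_ hfin
    rw [lintegral_lintegral_sq hkc.enorm, lintegral_lintegral_sq hlc.enorm]
    refine lintegral_congr fun w => ?_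
    rw [lintegral_enorm_mul_mul_enorm_mul hk hk_nonneg, hgram,
      ← lintegral_enorm_mul_mul_enorm_mul hl hl_nonneg]
  refine ⟨integrable_norm_integral_sq hkc hkfin, Complex.ofReal_injective ?_⟩
  rw [ofReal_integral_norm_integral_sq hkc hkfin, ofReal_integral_norm_integral_sq hlc hfin]
  simp only [integral_mul_mul_conj_mul hk hk_nonneg, integral_mul_mul_conj_mul hl hl_nonneg, hgram]

end Gram

/-! ### Cones whose determinant powers have power-type Laplace transforms -/

/-- An abstract symmetric cone `X` with pairing `pair`, determinant `Δ` and `N = n / r`, on which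
`∫ e^{-(x|y)} Δ(x)^s dν(x) = Γ_Ω(s + N) Δ(y)^{-(s + N)}` for `s > -1`. The Gamma function enters
through the entire function `R s = 1 / Γ_Ω(s + N)`, whose first zero `-1` bounds the domain of
convergence. -/
structure IsLaplaceCone {X : Type*} [Add X] [MeasurableSpace X] (ν : Measure X)
    (pair : X → X → ℝ) (Δ : X → ℝ) (N : ℝ) (R : ℂ → ℂ) : Prop where
  pair_comm : ∀ x y, pair x y = pair y x
  pair_add : ∀ x y z, pair x (y + z) = pair x y + pair x z
  measurable_pair : Measurable (Function.uncurry pair)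
  measurable_det : Measurable Δ
  det_pos : ∀ x, 0 < Δ x
  one_le : 1 ≤ N
  differentiable_invGamma : Differentiable ℂ R
  invGamma_neg_one : R (-1) = 0
  invGamma_ne_zero : ∀ s : ℂ, -1 < s.re → R s ≠ 0
  invGamma_mul_laplace : ∀ s : ℝ, -1 < s → ∀ y,
    R s * ((∫ x, exp (-pair x y) * Δ x ^ s ∂ν : ℝ) : ℂ) = ((Δ y ^ (-(s + N)) : ℝ) : ℂ)

/-- The weight `e^{-(u|e)} Δ(u)^{-λ}` of the K-Bessel integral; `(u|e)` plays the role of the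
trace. -/
noncomputable def besselWeight {X : Type*} (pair : X → X → ℝ) (Δ : X → ℝ) (e : X) (lam : ℂ)
    (u : X) : ℂ :=
  exp (-pair u e) * (Δ u : ℂ) ^ (-lam)

/-- The K-Bessel integral `∫ e^{-(x|J u)} e^{-(u|e)} Δ(u)^{-λ} dν(u)` of an abstract cone; `J`
plays the role of the inversion. -/
noncomputable def besselIntegral {X : Type*} [MeasurableSpace X] (ν : Measure X)
    (pair : X → X → ℝ) (Δ : X → ℝ) (J : X → X) (e : X) (lam : ℂ) (x : X) : ℂ :=
  ∫ u, exp (-pair x (J u)) * besselWeight pair Δ e lam u ∂ν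

theorem rpow_le_rpow_add_rpow {t a b c : ℝ} (ht : 0 < t) (hab : a ≤ b) (hbc : b ≤ c) :
    t ^ b ≤ t ^ a + t ^ c := by
  rcases le_total t 1 with h | h
  · exact (rpow_le_rpow_of_exponent_ge ht h hab).trans (le_add_of_nonneg_right (by positivity))
  · exact (rpow_le_rpow_of_exponent_le h hbc).trans (le_add_of_nonneg_left (by positivity))

theorem integral_mul_rpow_le_add {X : Type*} [MeasurableSpace X] {ν : Measure X} {f Δ : X → ℝ}
    (hf : ∀ x, 0 ≤ f x) (hΔ : ∀ x, 0 < Δ x) {a b c : ℝ} (hab : a ≤ b) (hbc : b ≤ c)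
    (ha : Integrable (fun x => f x * Δ x ^ a) ν) (hb : Integrable (fun x => f x * Δ x ^ b) ν)
    (hc : Integrable (fun x => f x * Δ x ^ c) ν) :
    ∫ x, f x * Δ x ^ b ∂ν ≤ ∫ x, f x * Δ x ^ a ∂ν + ∫ x, f x * Δ x ^ c ∂ν := by
  rw [← integral_add ha hc]
  refine integral_mono hb (ha.add hc) fun x => ?_
  simp only [← mul_add]
  exact mul_le_mul_of_nonneg_left (rpow_le_rpow_add_rpow (hΔ x) hab hbc) (hf x)

theorem rpow_half_mul_inv_mul_rpow_neg_sq {p q : ℝ} (hp : 0 < p) (hq : 0 < q) (c m t : ℝ) :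
    (p ^ (m / 2) * (c⁻¹ * q ^ (-t))) ^ 2 = (c ^ 2)⁻¹ * (p ^ m * q ^ (-(2 * t))) := by
  rw [mul_pow, mul_pow, ← rpow_natCast, ← rpow_natCast (q ^ _), ← rpow_mul hp.le, ← rpow_mul hq.le,
    inv_pow]
  push_cast
  ring_nf

namespace IsLaplaceCone

variable {X : Type*} [Add X] [MeasurableSpace X] {ν : Measure X} {pair : X → X → ℝ} {Δ : X → ℝ}
  {N : ℝ} {R : ℂ → ℂ}

theorem norm_invGamma_pos (h : IsLaplaceCone ν pair Δ N R) {s : ℝ} (hs : -1 < s) :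
    0 < ‖R s‖ :=
  norm_pos_iff.2 (h.invGamma_ne_zero s hs)

theorem integral_laplace (h : IsLaplaceCone ν pair Δ N R) {s : ℝ} (hs : -1 < s) (y : X) :
    ∫ x, exp (-pair x y) * Δ x ^ s ∂ν = ‖R s‖⁻¹ * Δ y ^ (-(s + N)) := by
  have hnonneg : 0 ≤ ∫ x, exp (-pair x y) * Δ x ^ s ∂ν :=
    integral_nonneg fun x => mul_nonneg (exp_pos _).le (rpow_nonneg (h.det_pos x).le _)
  have hnorm := congrArg norm (h.invGamma_mul_laplace s hs y)
  rw [norm_mul, Complex.norm_of_nonneg hnonneg,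
    Complex.norm_of_nonneg (rpow_nonneg (h.det_pos y).le _)] at hnorm
  rw [← hnorm, inv_mul_cancel_left₀ (h.norm_invGamma_pos hs).ne']

theorem integrable_laplace (h : IsLaplaceCone ν pair Δ N R) {s : ℝ} (hs : -1 < s) (y : X) :
    Integrable (fun x => exp (-pair x y) * Δ x ^ s) ν := by
  refine .of_integral_ne_zero ?_
  have hR := h.norm_invGamma_pos hs
  have hΔ := h.det_pos y
  rw [h.integral_laplace hs]
  positivity

theorem lintegral_laplace (h : IsLaplaceCone ν pair Δ N R) {s : ℝ} (hs : -1 < s) (y : X) :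
    ∫⁻ x, ENNReal.ofReal (exp (-pair x y) * Δ x ^ s) ∂ν
      = ENNReal.ofReal (‖R s‖⁻¹ * Δ y ^ (-(s + N))) := by
  rw [← h.integral_laplace hs, ofReal_integral_eq_lintegral_ofReal (h.integrable_laplace hs y)]
  exact .of_forall fun x => mul_nonneg (exp_pos _).le (rpow_nonneg (h.det_pos x).le _)

theorem inv_norm_invGamma_le (h : IsLaplaceCone ν pair Δ N R) {e : X} (he : Δ e = 1) {a b c : ℝ}
    (ha : -1 < a) (hab : a ≤ b) (hbc : b ≤ c) : ‖R b‖⁻¹ ≤ ‖R a‖⁻¹ + ‖R c‖⁻¹ := by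
  have hlaplace {s : ℝ} (hs : -1 < s) : ∫ x, exp (-pair x e) * Δ x ^ s ∂ν = ‖R s‖⁻¹ := by
    rw [h.integral_laplace hs, he, one_rpow, mul_one]
  have hb : -1 < b := ha.trans_le hab
  have hc : -1 < c := hb.trans_le hbc
  rw [← hlaplace ha, ← hlaplace hb, ← hlaplace hc]
  exact integral_mul_rpow_le_add (fun x => (exp_pos _).le) h.det_pos hab hbc
    (h.integrable_laplace ha e) (h.integrable_laplace hb e) (h.integrable_laplace hc e)

theorem integral_cpow_laplace (h : IsLaplaceCone ν pair Δ N R) {s : ℂ} (hs : -1 < s.re) (y : X) :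
    ∫ x, (exp (-pair x y) : ℂ) * (Δ x : ℂ) ^ s ∂ν = (R s)⁻¹ * (Δ y : ℂ) ^ (-(s + N)) := by
  have hpair := h.measurable_pair
  have hΔ : (Δ y : ℂ) ≠ 0 := Complex.ofReal_ne_zero.2 (h.det_pos y).ne'
  have hdens : Measurable fun x => (exp (-pair x y)).toNNReal := by fun_prop
  have hcoe (x : X) : ((exp (-pair x y)).toNNReal : ℝ) = exp (-pair x y) :=
    Real.coe_toNNReal _ (exp_pos _).le
  have key := integral_cpow_eq_of_integral_rpow_eq
    (ρ := ν.withDensity fun x => (exp (-pair x y)).toNNReal) (f := Δ) (a := -1)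
    (H := fun s => (R s)⁻¹ * (Δ y : ℂ) ^ (-(s + N))) h.det_pos ?_ (fun s hs => ?_)
    (fun s hs => ?_) hs
  · simpa only [integral_withDensity_eq_integral_smul hdens, NNReal.smul_def, hcoe,
      Complex.real_smul] using key
  · refine (h.differentiable_invGamma.differentiableOn.inv h.invGamma_ne_zero).mul ?_
    exact (DifferentiableOn.const_cpow (by fun_prop) (.inl hΔ))
  · rw [integrable_withDensity_iff_integrable_smul hdens]
    simpa only [NNReal.smul_def, hcoe, smul_eq_mul] using h.integrable_laplace hs y
  · rw [integral_withDensity_eq_integral_smul hdens]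
    simp only [NNReal.smul_def, hcoe, smul_eq_mul]
    rw [eq_inv_mul_iff_mul_eq₀ (h.invGamma_ne_zero s hs), h.invGamma_mul_laplace s hs,
      Complex.ofReal_cpow (h.det_pos y).le]
    push_cast
    rfl

theorem norm_invGamma_mul_norm_invGamma_le (h : IsLaplaceCone ν pair Δ N R) {e : X} (he : Δ e = 1)
    {a b c : ℝ} (ha : -1 < a) (hb : -1 < b) (hc : a + b + N ≤ c) :
    ‖R a‖ * ‖R b‖ ≤ ‖R (a + b + N : ℝ)‖ ^ 2 * ((1 + ‖R a‖ / ‖R c‖) * (1 + ‖R b‖ / ‖R c‖)) := by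
  have hN := h.one_le
  have hRa := h.norm_invGamma_pos ha
  have hRb := h.norm_invGamma_pos hb
  have hRab : 0 < ‖R (a + b + N : ℝ)‖ := h.norm_invGamma_pos (by linarith)
  calc ‖R a‖ * ‖R b‖
      = ‖R (a + b + N : ℝ)‖ ^ 2 * ((‖R a‖ * ‖R (a + b + N : ℝ)‖⁻¹)
          * (‖R b‖ * ‖R (a + b + N : ℝ)‖⁻¹)) := by
        field_simp
    _ ≤ ‖R (a + b + N : ℝ)‖ ^ 2 * ((‖R a‖ * (‖R a‖⁻¹ + ‖R c‖⁻¹))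
          * (‖R b‖ * (‖R b‖⁻¹ + ‖R c‖⁻¹))) := by
        gcongr
        · exact h.inv_norm_invGamma_le he ha (by linarith) hc
        · exact h.inv_norm_invGamma_le he hb (by linarith) hc
    _ = _ := by
        rw [mul_add, mul_add, mul_inv_cancel₀ hRa.ne', mul_inv_cancel₀ hRb.ne',
          ← div_eq_mul_inv, ← div_eq_mul_inv]

theorem lintegral_laplace_gram (h : IsLaplaceCone ν pair Δ N R) {m : ℝ} (hm : -1 < m) (y z : X) :
    ∫⁻ x, ENNReal.ofReal (Δ x ^ (m / 2) * exp (-pair x y) * (Δ x ^ (m / 2) * exp (-pair x z))) ∂ν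
      = ENNReal.ofReal (‖R m‖⁻¹ * Δ (y + z) ^ (-(m + N))) := by
  rw [← h.lintegral_laplace hm]
  refine lintegral_congr fun x => ?_
  rw [h.pair_add, neg_add, exp_add]
  nth_rw 3 [← add_halves m]
  rw [rpow_add (h.det_pos x)]
  ring_nf

theorem lintegral_gram_comp_eq (h : IsLaplaceCone ν pair Δ N R) {J : X → X}
    (hJ : ∀ u v, Δ (J u + J v) = Δ (u + v) * (Δ u)⁻¹ * (Δ v)⁻¹) {m : ℝ} (hm : -1 < m) (u v : X) :
    ∫⁻ x, ENNReal.ofReal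
        (Δ x ^ (m / 2) * exp (-pair x (J u)) * (Δ x ^ (m / 2) * exp (-pair x (J v)))) ∂ν
      = ∫⁻ x, ENNReal.ofReal (Δ x ^ (m / 2) * exp (-pair x u) * Δ u ^ (m + N)
          * (Δ x ^ (m / 2) * exp (-pair x v) * Δ v ^ (m + N))) ∂ν := by
  have hmeas := h.measurable_det
  have hpair := h.measurable_pair
  have hu := h.det_pos u
  have hv := h.det_pos v
  have huv := h.det_pos (u + v)
  calc _ = ENNReal.ofReal (Δ u ^ (m + N) * Δ v ^ (m + N)) * ∫⁻ x, ENNReal.ofReal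
          (Δ x ^ (m / 2) * exp (-pair x u) * (Δ x ^ (m / 2) * exp (-pair x v))) ∂ν := by
        rw [h.lintegral_laplace_gram hm, h.lintegral_laplace_gram hm,
          ← ENNReal.ofReal_mul (by positivity), hJ, mul_rpow (by positivity) (by positivity),
          mul_rpow (by positivity) (by positivity), inv_rpow hu.le, inv_rpow hv.le,
          ← rpow_neg hu.le, ← rpow_neg hv.le, neg_neg]
        ring_nf
    _ = _ := by
        rw [← lintegral_const_mul _ (by fun_prop)]
        refine lintegral_congr fun x => ?_
        rw [← ENNReal.ofReal_mul (by positivity)]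
        ring_nf

theorem integral_mul_besselWeight (h : IsLaplaceCone ν pair Δ N R) (e : X) {lam : ℂ} {m : ℝ}
    (hs : -1 < m + N - lam.re) (x : X) :
    ∫ u, ((Δ x ^ (m / 2) * exp (-pair x u) * Δ u ^ (m + N) : ℝ) : ℂ) * besselWeight pair Δ e lam u
        ∂ν
      = ((Δ x ^ (m / 2) : ℝ) : ℂ)
        * ((R (m + N - lam))⁻¹ * (Δ (x + e) : ℂ) ^ (-(m + N - lam + N : ℂ))) := by
  rw [← h.integral_cpow_laplace (by simpa using hs), ← integral_const_mul]
  refine integral_congr_ae (.of_forall fun u => ?_)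
  have hu : (Δ u : ℂ) ≠ 0 := Complex.ofReal_ne_zero.2 (h.det_pos u).ne'
  have hpow : (Δ u : ℂ) ^ (m + N - lam : ℂ) = ((Δ u ^ (m + N) : ℝ) : ℂ) * (Δ u : ℂ) ^ (-lam) := by
    rw [sub_eq_add_neg, Complex.cpow_add _ _ hu, Complex.ofReal_cpow (h.det_pos u).le]
    push_cast
    rfl
  simp only [besselWeight, hpow, h.pair_add, neg_add, exp_add, h.pair_comm x u]
  push_cast
  ring

theorem lintegral_enorm_mul_besselWeight (h : IsLaplaceCone ν pair Δ N R) (e : X) {lam : ℂ} {m : ℝ}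
    (hs : -1 < m + N - lam.re) (x : X) :
    ∫⁻ u, ‖((Δ x ^ (m / 2) * exp (-pair x u) * Δ u ^ (m + N) : ℝ) : ℂ)
        * besselWeight pair Δ e lam u‖ₑ ∂ν
      = ENNReal.ofReal (Δ x ^ (m / 2)
        * (‖R (m + N - lam.re : ℝ)‖⁻¹ * Δ (x + e) ^ (-(m + N - lam.re + N)))) := by
  have hmeas := h.measurable_det
  have hpair := h.measurable_pair
  have hx := h.det_pos x
  rw [ENNReal.ofReal_mul (by positivity), ← h.lintegral_laplace hs,
    ← lintegral_const_mul _ (by fun_prop)]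
  refine lintegral_congr fun u => ?_
  have hu := h.det_pos u
  rw [← ofReal_norm, ← ENNReal.ofReal_mul (by positivity), besselWeight, norm_mul, norm_mul,
    Complex.norm_of_nonneg (by positivity), Complex.norm_of_nonneg (by positivity),
    Complex.norm_cpow_eq_rpow_re_of_pos hu, h.pair_add, neg_add, exp_add, h.pair_comm x u,
    sub_eq_add_neg (m + N), rpow_add hu (m + N), Complex.neg_re]
  congr 1
  ring

theorem norm_besselIntegral_sq_mul_rpow (h : IsLaplaceCone ν pair Δ N R) (e : X) (J : X → X)
    (lam : ℂ) (m : ℝ) (x : X) :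
    ‖besselIntegral ν pair Δ J e lam x‖ ^ 2 * Δ x ^ m
      = ‖∫ u, ((Δ x ^ (m / 2) * exp (-pair x (J u)) : ℝ) : ℂ)
          * besselWeight pair Δ e lam u ∂ν‖ ^ 2 := by
  have hx := h.det_pos x
  simp only [Complex.ofReal_mul, mul_assoc, integral_const_mul, norm_mul, mul_pow]
  rw [Complex.norm_of_nonneg (by positivity), ← rpow_natCast (Δ x ^ _), ← rpow_mul hx.le,
    Nat.cast_two, div_mul_cancel₀ _ two_ne_zero, mul_comm, besselIntegral]

variable [MeasurableAdd₂ X] [SFinite ν]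

theorem lintegral_beta (h : IsLaplaceCone ν pair Δ N R) {e : X} (he : Δ e = 1) {a b : ℝ}
    (ha : -1 < a) (hb : -1 < b) :
    ∫⁻ x, ENNReal.ofReal (Δ x ^ a * Δ (x + e) ^ (-(a + b + 2 * N))) ∂ν
      = ENNReal.ofReal (‖R (a + b + N : ℝ)‖ * (‖R a‖⁻¹ * ‖R b‖⁻¹)) := by
  have hmeas := h.measurable_det
  have hpair := h.measurable_pair
  have hpos := h.det_pos
  have hab : -1 < a + b + N := by linarith [h.one_le]
  have hR := h.norm_invGamma_pos hab
  calc ∫⁻ x, ENNReal.ofReal (Δ x ^ a * Δ (x + e) ^ (-(a + b + 2 * N))) ∂ν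
      = ∫⁻ x, ∫⁻ y, ENNReal.ofReal (‖R (a + b + N : ℝ)‖ * Δ x ^ a) *
          ENNReal.ofReal (exp (-pair y (x + e)) * Δ y ^ (a + b + N)) ∂ν ∂ν := by
        refine lintegral_congr fun x => ?_
        have := hpos x
        rw [lintegral_const_mul _ (by fun_prop), h.lintegral_laplace hab,
          ← ENNReal.ofReal_mul (by positivity)]
        congr 1
        rw [show a + b + N + N = a + b + 2 * N by ring]
        field_simp
    _ = ∫⁻ y, ∫⁻ x, ENNReal.ofReal (‖R (a + b + N : ℝ)‖ * (exp (-pair y e) * Δ y ^ (a + b + N))) *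
          ENNReal.ofReal (exp (-pair x y) * Δ x ^ a) ∂ν ∂ν := by
        rw [lintegral_lintegral_swap (by fun_prop)]
        refine lintegral_congr fun y => lintegral_congr fun x => ?_
        have := hpos x
        have := hpos y
        rw [← ENNReal.ofReal_mul (by positivity), ← ENNReal.ofReal_mul (by positivity),
          h.pair_add, neg_add, exp_add, h.pair_comm y x]
        congr 1
        ring
    _ = ∫⁻ y, ENNReal.ofReal (‖R (a + b + N : ℝ)‖ * ‖R a‖⁻¹) *
          ENNReal.ofReal (exp (-pair y e) * Δ y ^ b) ∂ν := by
        refine lintegral_congr fun y => ?_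
        have := hpos y
        rw [lintegral_const_mul _ (by fun_prop), h.lintegral_laplace ha,
          ← ENNReal.ofReal_mul (by positivity), ← ENNReal.ofReal_mul (by positivity),
          show a + b + N = b + (a + N) by ring, rpow_add this, rpow_neg this.le]
        congr 1
        field_simp
    _ = ENNReal.ofReal (‖R (a + b + N : ℝ)‖ * (‖R a‖⁻¹ * ‖R b‖⁻¹)) := by
        rw [lintegral_const_mul _ (by fun_prop), h.lintegral_laplace hb, he, one_rpow, mul_one,
          ← ENNReal.ofReal_mul (by positivity), mul_assoc]

theorem integral_beta (h : IsLaplaceCone ν pair Δ N R) {e : X} (he : Δ e = 1) {a b : ℝ}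
    (ha : -1 < a) (hb : -1 < b) :
    ∫ x, Δ x ^ a * Δ (x + e) ^ (-(a + b + 2 * N)) ∂ν
      = ‖R (a + b + N : ℝ)‖ * (‖R a‖⁻¹ * ‖R b‖⁻¹) := by
  have hmeas := h.measurable_det
  rw [integral_eq_lintegral_of_nonneg_ae, h.lintegral_beta he ha hb,
    ENNReal.toReal_ofReal (by positivity)]
  · exact .of_forall fun x =>
      mul_nonneg (rpow_nonneg (h.det_pos x).le _) (rpow_nonneg (h.det_pos _).le _)
  · exact Measurable.aestronglyMeasurable (by fun_prop)

theorem lintegral_sq_lintegral_mul_besselWeight_lt_top (h : IsLaplaceCone ν pair Δ N R) {e : X}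
    (he : Δ e = 1) {lam : ℂ} {m : ℝ} (hm : -1 < m) (hlam : -1 < m + 2 * N - 2 * lam.re) :
    ∫⁻ x, (∫⁻ u, ‖((Δ x ^ (m / 2) * exp (-pair x u) * Δ u ^ (m + N) : ℝ) : ℂ)
      * besselWeight pair Δ e lam u‖ₑ ∂ν) ^ 2 ∂ν < ⊤ := by
  have hmeas := h.measurable_det
  have hpos := h.det_pos
  have hterm (x : X) : (∫⁻ u, ‖((Δ x ^ (m / 2) * exp (-pair x u) * Δ u ^ (m + N) : ℝ) : ℂ)
      * besselWeight pair Δ e lam u‖ₑ ∂ν) ^ 2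
        = ENNReal.ofReal (‖R (m + N - lam.re : ℝ)‖ ^ 2)⁻¹
          * ENNReal.ofReal (Δ x ^ m * Δ (x + e) ^ (-(m + (m + 2 * N - 2 * lam.re) + 2 * N))) := by
    have := hpos x
    have := hpos (x + e)
    rw [h.lintegral_enorm_mul_besselWeight e (by linarith), ← ENNReal.ofReal_pow (by positivity),
      ← ENNReal.ofReal_mul (by positivity), rpow_half_mul_inv_mul_rpow_neg_sq (hpos x) (hpos _)]
    ring_nf
  simp only [hterm]
  rw [lintegral_const_mul _ (by fun_prop), h.lintegral_beta he hm hlam]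
  exact ENNReal.mul_lt_top ENNReal.ofReal_lt_top ENNReal.ofReal_lt_top

theorem integral_norm_besselIntegral_sq_mul_rpow_eq_integral (h : IsLaplaceCone ν pair Δ N R)
    {e : X} (he : Δ e = 1) {J : X → X} (hJmeas : Measurable J)
    (hJ : ∀ u v, Δ (J u + J v) = Δ (u + v) * (Δ u)⁻¹ * (Δ v)⁻¹) {lam : ℂ} {m : ℝ} (hm : -1 < m)
    (hlam : -1 < m + 2 * N - 2 * lam.re) :
    Integrable (fun x => ‖besselIntegral ν pair Δ J e lam x‖ ^ 2 * Δ x ^ m) ν ∧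
      ∫ x, ‖besselIntegral ν pair Δ J e lam x‖ ^ 2 * Δ x ^ m ∂ν
        = (‖R (m + N - lam)‖ ^ 2)⁻¹ *
          ∫ x, Δ x ^ m * Δ (x + e) ^ (-(m + (m + 2 * N - 2 * lam.re) + 2 * N)) ∂ν := by
  have hmeas := h.measurable_det
  have hpair := h.measurable_pair
  have hpos := h.det_pos
  have hweight : Measurable (besselWeight pair Δ e lam) := by
    unfold besselWeight
    fun_prop
  obtain ⟨hint, heq⟩ := integral_norm_integral_sq_eq_of_gram_eq
    (ρ := ν) (ν := ν) (k := fun x u => Δ x ^ (m / 2) * exp (-pair x (J u)))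
    (l := fun x u => Δ x ^ (m / 2) * exp (-pair x u) * Δ u ^ (m + N))
    (by fun_prop) (by fun_prop) hweight
    (fun x u => mul_nonneg (rpow_nonneg (hpos x).le _) (exp_pos _).le)
    (fun x u => mul_nonneg (mul_nonneg (rpow_nonneg (hpos x).le _) (exp_pos _).le)
      (rpow_nonneg (hpos u).le _))
    (h.lintegral_gram_comp_eq hJ hm) (h.lintegral_sq_lintegral_mul_besselWeight_lt_top he hm hlam)
  simp only [h.norm_besselIntegral_sq_mul_rpow]
  refine ⟨hint, heq.trans ?_⟩
  rw [← integral_const_mul]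
  refine integral_congr_ae (.of_forall fun x => ?_)
  simp only
  rw [h.integral_mul_besselWeight e (by linarith), norm_mul, norm_mul, norm_inv,
    Complex.norm_of_nonneg (rpow_nonneg (hpos x).le _),
    Complex.norm_cpow_eq_rpow_re_of_pos (hpos _), Complex.neg_re,
    rpow_half_mul_inv_mul_rpow_neg_sq (hpos x) (hpos _)]
  simp only [Complex.add_re, Complex.sub_re, Complex.ofReal_re]
  ring_nf

theorem norm_invGamma_mul_integral_norm_besselIntegral_sq_mul_rpow
    (h : IsLaplaceCone ν pair Δ N R) {e : X} (he : Δ e = 1) {J : X → X} (hJmeas : Measurable J)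
    (hJ : ∀ u v, Δ (J u + J v) = Δ (u + v) * (Δ u)⁻¹ * (Δ v)⁻¹) {lam : ℂ} {m : ℝ} (hm : -1 < m)
    (hlam : -1 < m + 2 * N - 2 * lam.re) :
    ‖R (m + N - lam)‖ ^ 2 * (‖R m‖ * ‖R (m + 2 * N - 2 * lam.re : ℝ)‖)
        * ∫ x, ‖besselIntegral ν pair Δ J e lam x‖ ^ 2 * Δ x ^ m ∂ν
      = ‖R (m + (m + 2 * N - 2 * lam.re) + N : ℝ)‖ := by
  have hRm := h.norm_invGamma_pos hm
  have hRlam := h.norm_invGamma_pos hlam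
  have hRs : 0 < ‖R (m + N - lam)‖ := norm_pos_iff.2 <| h.invGamma_ne_zero _ <| by
    simp only [Complex.add_re, Complex.sub_re, Complex.ofReal_re]
    linarith
  rw [(h.integral_norm_besselIntegral_sq_mul_rpow_eq_integral he hJmeas hJ hm hlam).2,
    h.integral_beta he hm hlam]
  field_simp

theorem one_le_sq_norm_invGamma_mul (h : IsLaplaceCone ν pair Δ N R) {e : X} (he : Δ e = 1)
    {J : X → X} (hJmeas : Measurable J)
    (hJ : ∀ u v, Δ (J u + J v) = Δ (u + v) * (Δ u)⁻¹ * (Δ v)⁻¹) {lam : ℂ} {m c M : ℝ} (hm : -1 < m)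
    (hlam : -1 < m + 2 * N - 2 * lam.re) (hc : m + (m + 2 * N - 2 * lam.re) + N ≤ c)
    (hM : ∫ x, ‖besselIntegral ν pair Δ J e lam x‖ ^ 2 * Δ x ^ m ∂ν ≤ M) :
    1 ≤ (‖R (m + N - lam)‖ ^ 2 * M) ^ 2 * (‖R m‖ * ‖R (m + 2 * N - 2 * lam.re : ℝ)‖)
      * ((1 + ‖R m‖ / ‖R c‖) * (1 + ‖R (m + 2 * N - 2 * lam.re : ℝ)‖ / ‖R c‖)) := by
  set I := ∫ x, ‖besselIntegral ν pair Δ J e lam x‖ ^ 2 * Δ x ^ m ∂ν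
  set b := m + 2 * N - 2 * lam.re
  have hI : 0 ≤ I := integral_nonneg fun x =>
    mul_nonneg (sq_nonneg _) (rpow_nonneg (h.det_pos x).le _)
  have hR : 0 < ‖R m‖ * ‖R (b : ℝ)‖ := mul_pos (h.norm_invGamma_pos hm) (h.norm_invGamma_pos hlam)
  have hexp := h.norm_invGamma_mul_norm_invGamma_le he hm hlam hc
  rw [← h.norm_invGamma_mul_integral_norm_besselIntegral_sq_mul_rpow he hJmeas hJ hm hlam] at hexp
  refine le_of_mul_le_mul_left ?_ hR
  calc ‖R m‖ * ‖R (b : ℝ)‖ * 1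
      ≤ (‖R (m + N - lam)‖ ^ 2 * (‖R m‖ * ‖R (b : ℝ)‖) * I) ^ 2
          * ((1 + ‖R m‖ / ‖R c‖) * (1 + ‖R (b : ℝ)‖ / ‖R c‖)) := by rwa [mul_one]
    _ ≤ (‖R (m + N - lam)‖ ^ 2 * (‖R m‖ * ‖R (b : ℝ)‖) * M) ^ 2
          * ((1 + ‖R m‖ / ‖R c‖) * (1 + ‖R (b : ℝ)‖ / ‖R c‖)) := by gcongr
    _ = _ := by ring

theorem not_integrable_norm_besselIntegral_sq_mul_rpow (h : IsLaplaceCone ν pair Δ N R) {e : X}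
    (he : Δ e = 1) {J : X → X} (hJmeas : Measurable J)
    (hJ : ∀ u v, Δ (J u + J v) = Δ (u + v) * (Δ u)⁻¹ * (Δ v)⁻¹) {lam : ℂ} {m m₀ : ℝ} (hm : m ≤ m₀)
    (hm₀ : -1 ≤ m₀) (hm₀' : -1 ≤ m₀ + 2 * N - 2 * lam.re)
    (hzero : m₀ = -1 ∨ m₀ + 2 * N - 2 * lam.re = -1) :
    ¬Integrable (fun x => ‖besselIntegral ν pair Δ J e lam x‖ ^ 2 * Δ x ^ m) ν := by
  intro hint
  have hsuff {t : ℝ} (ht : m₀ < t) :=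
    (h.integral_norm_besselIntegral_sq_mul_rpow_eq_integral he hJmeas hJ (lam := lam) (m := t)
      (by linarith) (by linarith)).1
  set I : ℝ → ℝ := fun t => ∫ x, ‖besselIntegral ν pair Δ J e lam x‖ ^ 2 * Δ x ^ t ∂ν
  -- `Φ t ≥ 1` restates the bound on `I t`, and survives as `t ↓ m₀`, where `1 / Γ_Ω` kills `Φ`.
  let c := (m₀ + 1) + (m₀ + 1 + 2 * N - 2 * lam.re) + N
  let Φ : ℝ → ℝ := fun t =>
    (‖R (t + N - lam)‖ ^ 2 * (I m + I (m₀ + 1))) ^ 2 * (‖R t‖ * ‖R (t + 2 * N - 2 * lam.re : ℝ)‖)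
      * ((1 + ‖R t‖ / ‖R c‖) * (1 + ‖R (t + 2 * N - 2 * lam.re : ℝ)‖ / ‖R c‖))
  have hΦ : Continuous Φ := by
    have hR := h.differentiable_invGamma.continuous
    fun_prop
  have hΦ₀ : Φ m₀ = 0 := by
    have hR : R (-1 : ℝ) = 0 := by exact_mod_cast h.invGamma_neg_one
    rcases hzero with heq | heq <;>
      simp only [Φ, heq, hR, norm_zero, mul_zero, zero_mul]
  have hge : ∀ᶠ t in nhdsWithin m₀ (Set.Ioi m₀), 1 ≤ Φ t := by
    filter_upwards [Ioc_mem_nhdsGT (lt_add_one m₀)] with t ht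
    refine h.one_le_sq_norm_invGamma_mul he hJmeas hJ (by linarith [ht.1]) (by linarith [ht.1])
      (by linarith [ht.2]) ?_
    exact integral_mul_rpow_le_add (fun x => sq_nonneg _) h.det_pos (hm.trans ht.1.le) ht.2 hint
      (hsuff ht.1) (hsuff (lt_add_one m₀))
  have hlim := ge_of_tendsto (hΦ.continuousWithinAt (s := Set.Ioi m₀) (x := m₀)) hge
  linarith

theorem integrable_norm_besselIntegral_sq_mul_rpow_iff (h : IsLaplaceCone ν pair Δ N R) {e : X}
    (he : Δ e = 1) {J : X → X} (hJmeas : Measurable J)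
    (hJ : ∀ u v, Δ (J u + J v) = Δ (u + v) * (Δ u)⁻¹ * (Δ v)⁻¹) (lam : ℂ) (m : ℝ) :
    Integrable (fun x => ‖besselIntegral ν pair Δ J e lam x‖ ^ 2 * Δ x ^ m) ν
      ↔ -1 < m ∧ -1 < m + 2 * N - 2 * lam.re := by
  refine ⟨fun hint => ?_, fun hm =>
    (h.integral_norm_besselIntegral_sq_mul_rpow_eq_integral he hJmeas hJ hm.1 hm.2).1⟩
  by_contra hm
  rw [not_and_or, not_lt, not_lt] at hm
  have hle₁ := le_max_left (-1) (-1 - 2 * N + 2 * lam.re)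
  have hle₂ := le_max_right (-1) (-1 - 2 * N + 2 * lam.re)
  refine h.not_integrable_norm_besselIntegral_sq_mul_rpow he hJmeas hJ
    (m₀ := max (-1) (-1 - 2 * N + 2 * lam.re)) ?_ hle₁ (by linarith) ?_ hint
  · rcases hm with hm | hm <;> linarith
  · exact (max_choice _ _).imp id fun heq => by linarith

end IsLaplaceCone

/-! ### The Gindikin Gamma function -/

theorem gindikinGamma_ofReal (r : ℕ) (d s : ℝ) :
    gindikinGamma r d s = (((2 * π) ^ ((r : ℝ) * ((r : ℝ) - 1) * d / 4)
      * ∏ i ∈ Finset.range r, Real.Gamma (s - (i : ℝ) * d / 2) : ℝ) : ℂ) := by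
  simp only [gindikinGamma, Complex.ofReal_mul, Complex.ofReal_prod, ← Complex.Gamma_ofReal]
  push_cast
  rfl

theorem differentiable_inv_gindikinGamma (r : ℕ) (d : ℝ) :
    Differentiable ℂ fun s => (gindikinGamma r d s)⁻¹ := by
  simp only [gindikinGamma, mul_inv, ← Finset.prod_inv_distrib]
  refine (Differentiable.fun_finsetProd fun i _ => ?_).const_mul _
  exact Complex.differentiable_one_div_Gamma.comp (by fun_prop)

theorem gindikinGamma_ne_zero {r : ℕ} {d : ℝ} (hd : 0 ≤ d) {s : ℂ}
    (hs : ((r : ℝ) - 1) * d / 2 < s.re) : gindikinGamma r d s ≠ 0 := by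
  refine mul_ne_zero (Complex.ofReal_ne_zero.2 (by positivity)) (Finset.prod_ne_zero_iff.2 ?_)
  intro i hi
  have hir : (i : ℝ) ≤ r - 1 := by
    rw [le_sub_iff_add_le]; exact_mod_cast Finset.mem_range.1 hi
  have hid := mul_le_mul_of_nonneg_right hir hd
  refine Complex.Gamma_ne_zero_of_re_pos ?_
  have hre : (s - (i : ℝ) * d / 2 : ℂ).re = s.re - i * d / 2 := by
    rw [Complex.sub_re]; norm_cast
  rw [hre]
  linarith

-- The factor `Γ(0)`, a pole of the Gamma function, is `0` in Mathlib.
theorem gindikinGamma_sub_one_mul_div_two {r : ℕ} (hr : 1 ≤ r) (d : ℝ) :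
    gindikinGamma r d (((r : ℂ) - 1) * d / 2) = 0 := by
  have hfactor : (((r : ℂ) - 1) * d / 2 - ((r - 1 : ℕ) : ℝ) * d / 2) = 0 := by
    push_cast [Nat.cast_sub hr]; ring
  refine mul_eq_zero_of_right _ (Finset.prod_eq_zero
    (Finset.mem_range.2 (Nat.sub_one_lt_of_le hr le_rfl)) ?_)
  rw [hfactor, Complex.Gamma_zero]

/-! ### Gindikin's formula on a cone in Euclidean space -/

instance continuousAdd_convexCone {E : Type*} [TopologicalSpace E] [AddCommMonoid E] [Module ℝ E]
    [ContinuousAdd E] (C : ConvexCone ℝ E) : ContinuousAdd C :=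
  ContinuousAdd.induced (⟨(↑), fun _ _ => rfl⟩ : C →ₙ+ E)

theorem coneKBessel_coe_eq_besselIntegral {E : Type*} [NormedAddCommGroup E]
    [InnerProductSpace ℝ E] [MeasurableSpace E] {μ : Measure E} {C : ConvexCone ℝ E}
    (hC : MeasurableSet (C : Set E)) {Δ tr : E → ℝ}
    {jinv : E → E} {J : C → C} (hJ : ∀ u, (J u : E) = jinv u) {e : C}
    (htr : ∀ x, tr x = ⟪x, (e : E)⟫) (lam : ℂ) (x : C) :
    coneKBessel μ C Δ tr jinv lam x
      = besselIntegral (μ.comap (↑)) (fun x y : C => ⟪(x : E), (y : E)⟫) (fun x => Δ x) J e lam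
        x := by
  rw [coneKBessel, ← integral_subtype_comap hC]
  refine integral_congr_ae (.of_forall fun u => ?_)
  simp only [besselWeight, hJ, htr]
  push_cast [sub_eq_neg_add, Complex.exp_add]
  ring

theorem sigmaFinite_comap_coe {X : Type*} [MeasurableSpace X] {μ : Measure X} [SigmaFinite μ]
    {s : Set X} (hs : MeasurableSet s) : SigmaFinite (μ.comap ((↑) : s → X)) :=
  .of_map _ measurable_subtype_coe.aemeasurable (by rw [map_comap_subtype_coe hs]; infer_instance)

/-- Gindikin's formula `∫_Ω e^{-(x|y)} Δ(x)^s dμ(x) = Γ_Ω(s + N) Δ(y)^{-(s + N)}` for the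
determinant `Δ` of a cone `Ω` of rank `r` and multiplicity `d`, where
`N = n / r = 1 + (r - 1)d / 2`. -/
structure HasGindikinFormula {E : Type*} [NormedAddCommGroup E] [InnerProductSpace ℝ E]
    [MeasurableSpace E] (μ : Measure E) (Ω : Set E) (Δ : E → ℝ) (r : ℕ) (d N : ℝ) : Prop where
  one_le_rank : 1 ≤ r
  multiplicity_nonneg : 0 ≤ d
  eq_one_add : N = 1 + ((r : ℝ) - 1) * d / 2
  det_pos : ∀ x ∈ Ω, 0 < Δ x
  integral_eq : ∀ s : ℝ, -1 < s → ∀ y ∈ Ω,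
    ((∫ x in Ω, exp (-⟪x, y⟫) * Δ x ^ s ∂μ : ℝ) : ℂ)
      = gindikinGamma r d ((s + N : ℝ) : ℂ) * ((Δ y ^ (-(s + N)) : ℝ) : ℂ)

namespace HasGindikinFormula

variable {E : Type*} [NormedAddCommGroup E] [InnerProductSpace ℝ E] [MeasurableSpace E]
  {μ : Measure E} {Δ : E → ℝ} {r : ℕ} {d N : ℝ}

section Set

variable {Ω : Set E}

theorem of_integral_eq (hr : 1 ≤ r) (hd : 0 ≤ d) (hN : N = 1 + ((r : ℝ) - 1) * d / 2)
    (hpos : ∀ x ∈ Ω, 0 < Δ x)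
    (hlap : ∀ l : ℝ, ((r : ℝ) - 1) * d / 2 < l → ∀ y ∈ Ω,
      ∫ x in Ω, exp (-⟪x, y⟫) * Δ x ^ (l - N) ∂μ
        = ((2 * π) ^ ((r : ℝ) * ((r : ℝ) - 1) * d / 4)
          * ∏ i ∈ Finset.range r, Real.Gamma (l - (i : ℝ) * d / 2)) * Δ y ^ (-l)) :
    HasGindikinFormula μ Ω Δ r d N := by
  refine ⟨hr, hd, hN, hpos, fun s hs y hy => ?_⟩
  rw [gindikinGamma_ofReal, ← Complex.ofReal_mul, ← hlap (s + N) (by linarith) y hy,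
    add_sub_cancel_right]

theorem one_le (h : HasGindikinFormula μ Ω Δ r d N) : 1 ≤ N := by
  have hr : (1 : ℝ) ≤ r := by exact_mod_cast h.one_le_rank
  have hrd := mul_nonneg (sub_nonneg.2 hr) h.multiplicity_nonneg
  linarith [h.eq_one_add]

theorem gindikinGamma_add_ne_zero (h : HasGindikinFormula μ Ω Δ r d N) {s : ℂ} (hs : -1 < s.re) :
    gindikinGamma r d (s + N) ≠ 0 := by
  refine gindikinGamma_ne_zero h.multiplicity_nonneg ?_
  rw [Complex.add_re, Complex.ofReal_re]
  linarith [h.eq_one_add]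

theorem norm_gindikinGamma_pos (h : HasGindikinFormula μ Ω Δ r d N) :
    0 < ‖gindikinGamma r d N‖ := by
  simpa using h.gindikinGamma_add_ne_zero (s := 0) (by simp)

theorem integral_exp_neg_inner (h : HasGindikinFormula μ Ω Δ r d N) {y : E} (hy : y ∈ Ω) :
    ∫ x in Ω, exp (-⟪x, y⟫) ∂μ = ‖gindikinGamma r d N‖ * Δ y ^ (-N) := by
  have hnorm := congrArg norm (h.integral_eq 0 (by norm_num) y hy)
  simp only [rpow_zero, mul_one, zero_add] at hnorm
  rwa [norm_mul, Complex.norm_of_nonneg (integral_nonneg fun x => (exp_pos _).le),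
    Complex.norm_of_nonneg (rpow_nonneg (h.det_pos y hy).le _)] at hnorm

theorem integrableOn_exp_neg_inner (h : HasGindikinFormula μ Ω Δ r d N) {y : E} (hy : y ∈ Ω) :
    IntegrableOn (fun x => exp (-⟪x, y⟫)) Ω μ := by
  refine .of_integral_ne_zero ?_
  have hγ := h.norm_gindikinGamma_pos
  have hΔ := h.det_pos y hy
  rw [h.integral_exp_neg_inner hy]
  positivity

theorem inner_nonneg [FiniteDimensional ℝ E] [BorelSpace E] [μ.IsAddHaarMeasure]
    (h : HasGindikinFormula μ Ω Δ r d N) (hopen : IsOpen Ω)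
    (hsmul : ∀ c : ℝ, 0 < c → ∀ x ∈ Ω, c • x ∈ Ω) {x y : E} (hx : x ∈ Ω) (hy : y ∈ Ω) :
    0 ≤ ⟪x, y⟫ :=
  inner_nonneg_of_integrableOn_exp_neg_inner hopen hsmul (h.integrableOn_exp_neg_inner hy) hx

theorem continuousOn_det [FiniteDimensional ℝ E] (h : HasGindikinFormula μ Ω Δ r d N)
    (hopen : IsOpen Ω) (hconvex : Convex ℝ Ω) : ContinuousOn Δ Ω := by
  have hγ := h.norm_gindikinGamma_pos
  have hcont : ContinuousOn (fun y => ∫ x in Ω, exp (-⟪x, y⟫) ∂μ) Ω :=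
    (convexOn_integral_exp_neg_inner hconvex fun y hy =>
      h.integrableOn_exp_neg_inner hy).continuousOn hopen
  have hrpow : ContinuousOn
      (fun y => (‖gindikinGamma r d N‖⁻¹ * ∫ x in Ω, exp (-⟪x, y⟫) ∂μ) ^ (-N)⁻¹) Ω := by
    refine (hcont.const_mul _).rpow_const fun y hy => .inl ?_
    have hΔ := h.det_pos y hy
    rw [h.integral_exp_neg_inner hy]
    positivity
  refine hrpow.congr fun y hy => ?_
  simp only [h.integral_exp_neg_inner hy]
  rw [inv_mul_cancel_left₀ hγ.ne',
    rpow_rpow_inv (h.det_pos y hy).le (neg_ne_zero.2 (by linarith [h.one_le]))]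

theorem eq_of_forall_det_add_eq [μ.IsOpenPosMeasure]
    (h : HasGindikinFormula μ Ω Δ r d N) (hopen : IsOpen Ω) (hadd : ∀ x ∈ Ω, ∀ y ∈ Ω, x + y ∈ Ω)
    {z z' : E} (hz : z ∈ Ω) (hz' : z' ∈ Ω) (heq : ∀ v ∈ Ω, Δ (z + v) = Δ (z' + v)) : z = z' := by
  have hae := inner_ae_eq_of_integral_exp_neg_inner_eq hadd
    (fun y hy => h.integrableOn_exp_neg_inner hy) hz hz' fun v hv => by
      rw [h.integral_exp_neg_inner (hadd _ hz _ hv), h.integral_exp_neg_inner (hadd _ hz' _ hv),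
        heq v hv]
  exact eq_of_forall_mem_inner_eq hopen ⟨z, hz⟩
    (Measure.eqOn_open_of_ae_eq hae hopen (by fun_prop) (by fun_prop))

end Set

section ConvexCone

variable {C : ConvexCone ℝ E} [FiniteDimensional ℝ E] [BorelSpace E]

theorem measurable_of_involutive_of_det_add [μ.IsOpenPosMeasure]
    (h : HasGindikinFormula μ C Δ r d N) (hopen : IsOpen (C : Set E)) {J : C → C}
    (hJ : Function.Involutive J)
    (hadd : ∀ u v, Δ (J u + J v) = Δ (u + v) * (Δ u)⁻¹ * (Δ v)⁻¹) : Measurable J := by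
  have : PolishSpace C := hopen.polishSpace
  refine measurable_of_involutive_of_apply_add (Δ := fun x : C => Δ x)
    (h.continuousOn_det hopen C.convex).domRestrict (fun x => (h.det_pos x x.2).ne')
    (fun z z' hzz' => Subtype.ext ?_) hJ hadd
  exact h.eq_of_forall_det_add_eq hopen (fun x hx y hy => C.add_mem hx hy) z.2 z'.2
    fun v hv => hzz' ⟨v, hv⟩

theorem isLaplaceCone (h : HasGindikinFormula μ C Δ r d N) (hopen : IsOpen (C : Set E)) :
    IsLaplaceCone (μ.comap ((↑) : C → E)) (fun x y : C => ⟪(x : E), (y : E)⟫) (fun x => Δ x) N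
      (fun s => (gindikinGamma r d (s + N))⁻¹) where
  pair_comm _ _ := real_inner_comm _ _
  pair_add _ _ _ := inner_add_right _ _ _
  measurable_pair := by fun_prop
  measurable_det := (h.continuousOn_det hopen C.convex).domRestrict.measurable
  det_pos x := h.det_pos x x.2
  one_le := h.one_le
  differentiable_invGamma := (differentiable_inv_gindikinGamma r d).comp (by fun_prop)
  invGamma_neg_one := by
    rw [h.eq_one_add, inv_eq_zero, ← gindikinGamma_sub_one_mul_div_two h.one_le_rank d]
    push_cast
    ring_nf
  invGamma_ne_zero _ hs := inv_ne_zero (h.gindikinGamma_add_ne_zero hs)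
  invGamma_mul_laplace s hs y := by
    have hcomap : ∫ x : C, exp (-⟪(x : E), (y : E)⟫) * Δ x ^ s ∂μ.comap (↑)
        = ∫ x in C, exp (-⟪x, (y : E)⟫) * Δ x ^ s ∂μ :=
      integral_subtype_comap hopen.measurableSet fun x => exp (-⟪x, (y : E)⟫) * Δ x ^ s
    rw [hcomap, h.integral_eq s hs y y.2, Complex.ofReal_add, inv_mul_cancel_left₀]
    exact h.gindikinGamma_add_ne_zero hs

end ConvexCone

end HasGindikinFormula

theorem coneKBessel_L2_integral_general {E : Type*} [NormedAddCommGroup E]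
    [InnerProductSpace ℝ E] [FiniteDimensional ℝ E] [MeasurableSpace E] [BorelSpace E]
    {μ : Measure E} [SigmaFinite μ] [μ.IsOpenPosMeasure] {C : ConvexCone ℝ E}
    (hopen : IsOpen (C : Set E)) {Δ tr : E → ℝ} {jinv : E → E} {e : E} {r : ℕ} {d N : ℝ}
    (h : HasGindikinFormula μ C Δ r d N) (heC : e ∈ C) (he : Δ e = 1)
    (htr : ∀ x, tr x = ⟪x, e⟫) (hmem : ∀ x ∈ C, jinv x ∈ C) (hinv : ∀ x ∈ C, jinv (jinv x) = x)
    (hadd : ∀ u ∈ C, ∀ v ∈ C, Δ (jinv u + jinv v) = Δ (u + v) * (Δ u)⁻¹ * (Δ v)⁻¹)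
    (lam : ℂ) (m : ℝ) :
    IntegrableOn (fun x => ‖coneKBessel μ C Δ tr jinv lam x‖ ^ 2 * Δ x ^ m) C μ
      ↔ -1 < m ∧ -3 - ((r : ℝ) - 1) * d < m - 2 * lam.re := by
  have hC := hopen.measurableSet
  let J : C → C := fun x => ⟨jinv x, hmem x x.2⟩
  have hJadd (u v : C) : Δ (J u + J v) = Δ (u + v) * (Δ u)⁻¹ * (Δ v)⁻¹ := hadd u u.2 v v.2
  have hJ : Measurable J :=
    h.measurable_of_involutive_of_det_add hopen (fun x => Subtype.ext (hinv x x.2)) hJadd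
  have : SigmaFinite (μ.comap ((↑) : C → E)) := sigmaFinite_comap_coe hC
  have hK := (h.isLaplaceCone hopen).integrable_norm_besselIntegral_sq_mul_rpow_iff
    (e := ⟨e, heC⟩) he hJ hJadd lam m
  simp only [← coneKBessel_coe_eq_besselIntegral hC (e := ⟨e, heC⟩) (J := J) (fun _ => rfl) htr]
    at hK
  rw [integrableOn_iff_comap_subtypeVal hC]
  refine hK.trans (and_congr_right fun _ => ?_)
  rw [h.eq_one_add]
  constructor <;> intro hm <;> linarith

/-- **Square-integrability of the K-Bessel function.** With `Ω, Δ, d, r, n` as above,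
the integral `∫_Ω |𝒦_λ(x)|² Δ(x)^m dx` converges if and only if `m > −1` and
`m − 2 Re λ > −3 − (r−1)d`. -/
theorem coneKBessel_L2_integral
    {E : Type*} [NormedAddCommGroup E] [InnerProductSpace ℝ E] [FiniteDimensional ℝ E]
    [MeasurableSpace E] [BorelSpace E]
    (μ : Measure E) [μ.IsAddHaarMeasure]
    (jmul : E →ₗ[ℝ] E →ₗ[ℝ] E) (one : E) (Ω : Set E) (Δ tr : E → ℝ) (jinv : E → E)
    (r : ℕ) (d : ℝ) (hr : 1 ≤ r) (hd : 0 < d)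
    (hcomm : ∀ x y, jmul x y = jmul y x)
    (hjordan : ∀ x y, jmul (jmul x x) (jmul x y) = jmul x (jmul (jmul x x) y))
    (hone : ∀ x, jmul one x = x)
    (htr : ∀ x, tr x = ⟪x, one⟫)
    (hinner : ∀ x y, ⟪x, y⟫ = tr (jmul x y))
    (hΩ : Ω = interior {x | ∃ y, x = jmul y y})
    (hdim : (Module.finrank ℝ E : ℝ) = r + r * ((r : ℝ) - 1) * d / 2)
    (hΔpos : ∀ x ∈ Ω, 0 < Δ x)
    (hΔone : Δ one = 1)
    (hΔhom : ∀ c : ℝ, 0 < c → ∀ x, Δ (c • x) = c ^ r * Δ x)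
    (hinvΩ : ∀ x ∈ Ω, jinv x ∈ Ω)
    (hinvinv : ∀ x ∈ Ω, jinv (jinv x) = x)
    (hinvmul : ∀ x ∈ Ω, jmul x (jinv x) = one)
    (hΔinv : ∀ x ∈ Ω, Δ (jinv x) = (Δ x)⁻¹)
    (hLap : ∀ l : ℝ, ((r : ℝ) - 1) * d / 2 < l → ∀ y ∈ Ω,
      ∫ x in Ω, Real.exp (-⟪x, y⟫) * Δ x ^ (l - (Module.finrank ℝ E : ℝ) / r) ∂μ
        = ((2 * Real.pi) ^ ((r : ℝ) * ((r : ℝ) - 1) * d / 4)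
            * ∏ i ∈ Finset.range r, Real.Gamma (l - (i : ℝ) * d / 2)) * Δ y ^ (-l))
    (hΔsum : ∀ u ∈ Ω, ∀ v ∈ Ω, Δ (jinv u + jinv v) = Δ (u + v) * (Δ u)⁻¹ * (Δ v)⁻¹)
    (hΔP : ∀ x y : E,
      Δ ((2 : ℝ) • jmul x (jmul x y) - jmul (jmul x x) y) = Δ x ^ 2 * Δ y)
    (lam : ℂ) (m : ℝ) :
    IntegrableOn
        (fun x => ‖coneKBessel μ Ω Δ tr jinv lam x‖ ^ 2 * Δ x ^ m) Ω μ
      ↔ (-1 < m ∧ -3 - ((r : ℝ) - 1) * d < m - 2 * lam.re) := by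
  subst hΩ
  have hprod : IsUnitalJordanProduct jmul one := ⟨hcomm, hjordan, hone⟩
  have hN : (Module.finrank ℝ E : ℝ) / r = 1 + ((r : ℝ) - 1) * d / 2 := by
    rw [hdim]
    field_simp
  have h : HasGindikinFormula μ (interior (squares jmul)) Δ r d (Module.finrank ℝ E / r) :=
    .of_integral_eq hr hd.le hN hΔpos hLap
  have hdual (x) (hx : x ∈ interior (squares jmul)) (y) (hy : y ∈ interior (squares jmul)) :
      0 ≤ ⟪x, y⟫ :=
    h.inner_nonneg isOpen_interior (fun c hc x => smul_mem_interior_squares hc) hx hy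
  exact coneKBessel_L2_integral_general (C := hprod.squaresCone hinner hdual) isOpen_interior h
    hprod.one_mem_interior_squares hΔone htr hinvΩ hinvinv hΔsum lam m
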